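/- Let n = 100 and let x, y ∈ S_100 be the permutations given in the context, with z = (x·y)⁻¹. Then (x, y, z) is a nice triple; the cycle types of x, y, z are 5^19, 2^47 and 6^10·3^10·2^5 respectively; and the subgroup ⟨x, y⟩ of S_100 has cardinality 88704000 (the order of Aut(HS)). -/

import Mathlib

/-- `permInd s` = (sum of the cycle type of `s`) − (number of entries of the cycle type of `s`),
i.e. `n` minus the number of cycles of `s` when fixed points are counted as cycles. -/
def permInd {n : ℕ} (s : Equiv.Perm (Fin n)) : ℕ :=
  s.cycleType.sum - Multiset.card s.cycleType

/-- A `MulAction` is preprimitive if it is pretransitive and every block is trivial. -/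
def IsPreprimitive (G : Type*) (X : Type*) [Group G] [MulAction G X] : Prop :=
  MulAction.IsPretransitive G X ∧
    ∀ B : Set X, MulAction.IsBlock G B → MulAction.IsTrivialBlock B

/-- A triple `(x, y, z)` of permutations in `S_n` is *nice*:
(i) `x * y * z = 1`; (ii) `G = ⟨x, y⟩` is neither the alternating nor the symmetric group;
(iii) `G` acts primitively on `Fin n` and is almost simple; (iv) the triple has genus 0;
(v) the triple is rigid in `G`; (vi) `x`, `y`, `z` lie in rational conjugacy classes of `G`. -/
def IsNice {n : ℕ} (x y z : Equiv.Perm (Fin n)) : Prop :=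
  x * y * z = 1 ∧
  (Subgroup.closure {x, y} ≠ alternatingGroup (Fin n) ∧
    Subgroup.closure {x, y} ≠ ⊤) ∧
  IsPreprimitive (Subgroup.closure {x, y}) (Fin n) ∧
  (∃ S : Subgroup (Subgroup.closure {x, y}), S.Normal ∧ IsSimpleGroup S ∧
    (∃ a b : S, a * b ≠ b * a) ∧
    Subgroup.centralizer (S : Set (Subgroup.closure {x, y})) = ⊥) ∧
  permInd x + permInd y + permInd z = 2 * (n - 1) ∧
  (∀ x' y' z' : Equiv.Perm (Fin n),
    x' * y' * z' = 1 →
    Subgroup.closure {x', y'} = Subgroup.closure {x, y} →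
    (∃ g ∈ Subgroup.closure {x, y}, g * x * g⁻¹ = x') →
    (∃ g ∈ Subgroup.closure {x, y}, g * y * g⁻¹ = y') →
    (∃ g ∈ Subgroup.closure {x, y}, g * z * g⁻¹ = z') →
    ∃ g ∈ Subgroup.closure {x, y},
      g * x * g⁻¹ = x' ∧ g * y * g⁻¹ = y' ∧ g * z * g⁻¹ = z') ∧
  ∀ g ∈ ({x, y, z} : Set (Equiv.Perm (Fin n))), ∀ k : ℤ,
    Int.gcd k (orderOf g) = 1 →
    ∃ h ∈ Subgroup.closure {x, y}, h * g * h⁻¹ = g ^ k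

/-- The permutation given by a list of (disjoint) cycles, each written as a list of points. -/
def permOfCycles {n : ℕ} (cs : List (List (Fin n))) : Equiv.Perm (Fin n) :=
  (cs.map List.formPerm).prod

def x : Equiv.Perm (Fin 100) := permOfCycles [
  [1, 64, 8, 54, 37],
  [2, 20, 81, 42, 49],
  [3, 98, 32, 73, 89],
  [4, 96, 86, 15, 79],
  [5, 22, 28, 78, 48],
  [6, 67, 97, 40, 14],
  [7, 58, 82, 59, 18],
  [9, 16, 87, 85, 60],
  [10, 70, 41, 56, 55],
  [11, 77, 36, 25, 68],
  [12, 17, 19, 21, 80],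
  [13, 35, 90, 33, 91],
  [23, 50, 66, 84, 27],
  [24, 72, 95, 52, 76],
  [26, 99, 100, 57, 93],
  [29, 71, 38, 69, 65],
  [30, 74, 94, 53, 51],
  [31, 45, 47, 75, 34],
  [43, 63, 44, 46, 62]]

def y : Equiv.Perm (Fin 100) := permOfCycles [
  [1, 20],
  [2, 64],
  [3, 76],
  [4, 45],
  [5, 83],
  [6, 26],
  [7, 13],
  [8, 74],
  [9, 41],
  [10, 63],
  [11, 25],
  [12, 66],
  [14, 21],
  [15, 52],
  [16, 62],
  [17, 33],
  [18, 35],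
  [19, 42],
  [22, 60],
  [23, 58],
  [24, 73],
  [28, 98],
  [29, 82],
  [30, 53],
  [31, 61],
  [32, 59],
  [34, 67],
  [36, 95],
  [37, 85],
  [38, 47],
  [39, 51],
  [40, 80],
  [43, 92],
  [44, 78],
  [46, 99],
  [48, 55],
  [49, 94],
  [50, 91],
  [54, 90],
  [65, 88],
  [69, 72],
  [71, 75],
  [77, 79],
  [81, 87],
  [84, 97],
  [86, 100],
  [93, 96]]

/-
The group `G = ⟨x, y⟩` preserves the Higman–Sims graph on the `100` points. This bounds the orbits
in a chain of point stabilizers from above, and explicit elements of `G` bound them from below, so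
that `|G| = 88704000`. The even subgroup of `G` has rank `3` with subdegrees `1`, `22`, `77` and
is therefore primitive. A normal subgroup `N ≠ 1` of it is transitive; if `11` did not divide `|N|`,
an element of order `11` would normalize, hence centralize, a Sylow `5`-subgroup of `N`, whose orbit
lengths are multiples of `25`, and would thus fix all points. Since `11²` does not divide `|G|`, it
follows that `N` contains all elements of order `11`, and these generate the even subgroup.

For rigidity one may assume `x' = x`. The involution `y'` interchanges two points at distance `2`
and fixes their common neighbours, because `y` does so. Starting from each such pair, up to the
centralizer of `x`, backtracking over partial graph involutions finds all possible `y'`: the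
distances from a point to its images under the powers of `x * y'` follow the same patterns as for
`x * y`. All solutions that generate a transitive group with `x` are conjugate to `y` under the
centralizer of `x`.
-/

namespace HigmanSims

open scoped Pointwise

section GroupTheory

variable {M : Type*} [Group M]

theorem conj_by_mul (a b g : M) :
    a * b * g * (a * b)⁻¹ = a * (b * g * b⁻¹) * a⁻¹ := by
  group

theorem pow_conj_eq_zpow_pow {g h : M} {r : ℤ} (hconj : h * g * h⁻¹ = g ^ r) (m : ℕ) :
    h ^ m * g * (h ^ m)⁻¹ = g ^ r ^ m := by
  induction m with
  | zero => simp
  | succ m ih =>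
    calc h ^ (m + 1) * g * (h ^ (m + 1))⁻¹ = h ^ m * (h * g * h⁻¹) * (h ^ m)⁻¹ := by
          rw [pow_succ]; group
      _ = (h ^ m * g * (h ^ m)⁻¹) ^ r := by rw [hconj, conj_zpow]
      _ = g ^ r ^ (m + 1) := by rw [ih, ← zpow_mul, pow_succ]

theorem exists_mem_conj_eq_zpow [Finite M] {H : Subgroup M} {g h : M} (hh : h ∈ H)
    {r : ℤ} (hconj : h * g * h⁻¹ = g ^ r)
    (hgen : ∀ j < orderOf g, j.Coprime (orderOf g) → ∃ m < orderOf g, r ^ m ≡ j [ZMOD orderOf g])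
    (k : ℤ) (hk : Int.gcd k (orderOf g) = 1) : ∃ c ∈ H, c * g * c⁻¹ = g ^ k := by
  have hpos : (0 : ℤ) < orderOf g := mod_cast orderOf_pos g
  lift k % orderOf g to ℕ using Int.emod_nonneg k hpos.ne' with j hj
  have hlt : j < orderOf g := by have := Int.emod_lt_of_pos k hpos; omega
  have hcoprime : j.Coprime (orderOf g) := by
    rw [Nat.Coprime, ← Int.gcd_natCast_natCast, hj, Int.gcd_emod, hk]
  obtain ⟨m, -, hm⟩ := hgen j hlt hcoprime
  exact ⟨h ^ m, H.pow_mem hh m, (pow_conj_eq_zpow_pow hconj m).trans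
    (zpow_eq_zpow_iff_modEq.mpr (hm.trans (hj ▸ Int.mod_modEq k _)))⟩

theorem mem_closure_conj_pair_or_mul_mem {a b g : M} (hb : b * b = 1)
    (hg : g ∈ Subgroup.closure {a, b}) :
    g ∈ Subgroup.closure {a, b * a * b} ∨ b * g ∈ Subgroup.closure {a, b * a * b} := by
  have ha : a ∈ Subgroup.closure {a, b * a * b} := Subgroup.subset_closure (by simp)
  have hbab : b * a * b ∈ Subgroup.closure {a, b * a * b} := Subgroup.subset_closure (by simp)
  have hb_inv : b⁻¹ = b := inv_eq_of_mul_eq_one_left hb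
  have ha_mul (c : M) : b * (a * c) = b * a * b * (b * c) := by
    rw [mul_assoc (b * a), ← mul_assoc b b, hb, one_mul, mul_assoc]
  have hainv_mul (c : M) : b * (a⁻¹ * c) = (b * a * b)⁻¹ * (b * c) := by
    rw [mul_inv_rev, mul_inv_rev, hb_inv, mul_assoc, mul_assoc, ← mul_assoc b b, hb, one_mul]
  have hb_mul (c : M) : b * (b * c) = c := by rw [← mul_assoc, hb, one_mul]
  induction hg using Subgroup.closure_induction_left with
  | one => exact .inl (one_mem _)
  | mul_left u hu v _ ih =>
    rcases hu with rfl | rfl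
    · rw [ha_mul]
      exact ih.imp (mul_mem ha) (mul_mem hbab)
    · rw [hb_mul]
      exact ih.symm
  | inv_mul_cancel u hu v _ ih =>
    rcases hu with rfl | rfl
    · rw [hainv_mul]
      exact ih.imp (mul_mem (inv_mem ha)) (mul_mem (inv_mem hbab))
    · rw [hb_inv, hb_mul]
      exact ih.symm

theorem isSimpleGroup_of_prime_dvd_card_normal [Finite M] [Nontrivial M] {p : ℕ} (hp : p.Prime)
    (hcard : ¬ p ^ 2 ∣ Nat.card M) (hgen : Subgroup.closure {t : M | t ^ p = 1} = ⊤)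
    (hnormal : ∀ N : Subgroup M, N.Normal → N ≠ ⊥ → p ∣ Nat.card N) : IsSimpleGroup M := by
  refine ⟨fun N hN => or_iff_not_imp_left.mpr fun hbot => top_unique ?_⟩
  rw [← hgen, Subgroup.closure_le]
  intro t (ht : t ^ p = 1)
  have hcoprime : p.Coprime N.index := by
    refine (Nat.Prime.coprime_iff_not_dvd hp).mpr fun hdvd => hcard ?_
    rw [← N.card_mul_index, sq]
    exact mul_dvd_mul (hnormal N hN hbot) hdvd
  have hquot : (t : M ⧸ N) ^ p = 1 := by rw [← QuotientGroup.mk_pow, ht, QuotientGroup.mk_one]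
  have hindex : (t : M ⧸ N) ^ N.index = 1 := pow_card_eq_one'
  exact (QuotientGroup.eq_one_iff t).mp
    ((pow_eq_one_iff_of_coprime hcoprime).mp ⟨hquot, hindex⟩)

variable {X : Type*} [MulAction M X]

theorem natCard_fixedBy_modEq [Finite X] {p : ℕ} (hp : p.Prime) {t : M} (ht : t ^ p = 1) :
    Nat.card (MulAction.fixedBy X t) ≡ Nat.card X [MOD p] := by
  classical
  have := Fact.mk hp
  have := Fintype.ofFinite X
  have hpow : MulAction.toEndHom (α := X) t ^ p ^ 1 = 1 := by
    rw [pow_one, ← map_pow, ht, map_one]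
  have hcard := (Equiv.Perm.card_fixedPoints_modEq hpow).symm
  rwa [← Nat.card_eq_fintype_card, ← Nat.card_eq_fintype_card] at hcard

theorem mulAut_eq_one_of_pow_prime_eq_one [Finite M] {p : ℕ} (hp : p.Prime)
    (hdvd : ∀ d, d ∣ Nat.card M → d ≡ Nat.card M [MOD p] → d = Nat.card M)
    {f : MulAut M} (hf : f ^ p = 1) : f = 1 := by
  let F := f.toMonoidHom.eqLocus (MonoidHom.id M)
  have hmod : Nat.card F ≡ Nat.card M [MOD p] := natCard_fixedBy_modEq hp hf
  have htop : F = ⊤ := F.card_eq_iff_eq_top.mp (hdvd _ F.card_subgroup_dvd_card hmod)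
  ext m
  exact (htop ▸ Subgroup.mem_top m : m ∈ F)

theorem mul_comm_of_mem_normalizer_of_pow_prime_eq_one {H : Subgroup M} [Finite H] {p : ℕ}
    (hp : p.Prime) (hdvd : ∀ d, d ∣ Nat.card H → d ≡ Nat.card H [MOD p] → d = Nat.card H) {t : M}
    (htH : t ∈ Subgroup.normalizer (H : Set M)) (ht : t ^ p = 1) {h : M} (hh : h ∈ H) :
    h * t = t * h := by
  have hpow : H.normalizerMonoidHom ⟨t, htH⟩ ^ p = 1 := by
    rw [← map_pow, (Subtype.ext ht : (⟨t, htH⟩ : Subgroup.normalizer (H : Set M)) ^ p = 1), map_one]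
  have hconj : t * h * t⁻¹ = h := congrArg Subtype.val
    (DFunLike.congr_fun (mulAut_eq_one_of_pow_prime_eq_one hp hdvd hpow) (⟨h, hh⟩ : H))
  exact (mul_inv_eq_iff_eq_mul.mp hconj).symm

theorem dvd_natCard_of_forall_dvd_ncard_orbit [Finite X] {d : ℕ}
    (hd : ∀ ω : X, d ∣ (MulAction.orbit M ω).ncard) : d ∣ Nat.card X := by
  classical
  have := Fintype.ofFinite (Quotient (MulAction.orbitRel M X))
  rw [Nat.card_congr (MulAction.selfEquivSigmaOrbits M X), Nat.card_sigma]
  exact Finset.dvd_sum fun ω _ => hd ω.out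

theorem dvd_natCard_fixedBy_of_commute [Finite X] {H : Subgroup M} {t : M}
    (hcomm : ∀ h ∈ H, h * t = t * h) {d : ℕ} (hd : ∀ ω : X, d ∣ (MulAction.orbit H ω).ncard) :
    d ∣ Nat.card (MulAction.fixedBy X t) := by
  let F : SubMulAction H X :=
    { carrier := MulAction.fixedBy X t
      smul_mem' := fun h ω (hω : t • ω = ω) => by
        change t • (h : M) • ω = (h : M) • ω
        rw [← mul_smul, ← hcomm h h.2, mul_smul, hω] }
  refine dvd_natCard_of_forall_dvd_ncard_orbit (M := H) (X := F) fun ω => ?_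
  rw [← Set.ncard_image_of_injective _ Subtype.val_injective, SubMulAction.val_image_orbit]
  exact hd ω

theorem natCard_eq_ncard_orbit_mul_natCard_inf_stabilizer (H : Subgroup M) (b : X) :
    Nat.card H = (MulAction.orbit H b).ncard * Nat.card ↥(H ⊓ MulAction.stabilizer M b) := by
  have hindex : (MulAction.stabilizer M b).relIndex H = (MulAction.orbit H b).ncard :=
    MulAction.index_stabilizer H b
  rw [← hindex, mul_comm, ← Subgroup.inf_relIndex_left, ← Subgroup.relIndex_bot_left,
    ← Subgroup.relIndex_bot_left, Subgroup.relIndex_mul_relIndex ⊥ _ H bot_le inf_le_left]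

theorem pow_dvd_ncard_orbit_sylow [Finite M] [MulAction.IsPretransitive M X] {q k : ℕ}
    [Fact q.Prime] (P : Sylow q M) (hk : q ^ k ∣ Nat.card X) (ω : X) :
    q ^ k ∣ (MulAction.orbit P ω).ncard := by
  have hindex : (MulAction.stabilizer M ω ⊓ P).index = (MulAction.orbit P ω).ncard * P.index := by
    rw [← Subgroup.relIndex_mul_index inf_le_right, Subgroup.inf_relIndex_right,
      ← MulAction.index_stabilizer]
    rfl
  have hdvd : q ^ k ∣ (MulAction.orbit P ω).ncard * P.index := by
    rw [← hindex]
    rw [← MulAction.index_stabilizer_of_transitive M ω] at hk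
    exact hk.trans (Subgroup.index_dvd_of_le inf_le_left)
  exact (Nat.Coprime.pow_left k <| (Nat.Prime.coprime_iff_not_dvd Fact.out).mpr
    P.not_dvd_index).dvd_of_dvd_mul_right hdvd

theorem exists_orderOf_eq_prime_of_sup_normal_eq_top [Finite M] {H N : Subgroup M} [N.Normal]
    (hsup : H ⊔ N = ⊤) {p : ℕ} (hp : p.Prime) (hM : p ∣ Nat.card M) (hN : ¬ p ∣ Nat.card N) :
    ∃ t ∈ H, orderOf t = p := by
  have := Fact.mk hp
  have hindex : N.index ∣ Nat.card H := by
    rw [← Subgroup.relIndex_top_right, ← hsup, Subgroup.relIndex_sup_right]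
    exact N.relIndex_dvd_card H
  rw [← N.card_mul_index, hp.dvd_mul] at hM
  obtain ⟨t, ht⟩ := exists_prime_orderOf_dvd_card' p ((hM.resolve_left hN).trans hindex)
  exact ⟨t, t.2, (Subgroup.orderOf_coe t).trans ht⟩

/- If `p` does not divide `|N|`, the Frattini argument provides an element `t` of order `p`
normalizing a Sylow `q`-subgroup `P` of `N`. The congruence hypotheses force `t` to centralize `P`,
so that `Fix t` is a union of `P`-orbits, and finally force `Fix t` to be everything. -/
theorem prime_dvd_natCard_of_isPretransitive_normal [Finite M] [Finite X] [FaithfulSMul M X]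
    (N : Subgroup M) [N.Normal] [MulAction.IsPretransitive N X] {p q a : ℕ} (hp : p.Prime)
    (hq : q.Prime) (hM : p ∣ Nat.card M) (hX : q ^ a ∣ Nat.card X)
    (hpow : ∀ k, q ^ k ∣ Nat.card M → ∀ j ≤ k, q ^ j ≡ q ^ k [MOD p] → j = k)
    (hfix : ∀ m ≤ Nat.card X, q ^ a ∣ m → m ≡ Nat.card X [MOD p] → m = Nat.card X) :
    p ∣ Nat.card N := by
  by_contra hN
  have := Fact.mk hq
  let P : Sylow q N := default
  let Q : Subgroup M := P.map N.subtype
  obtain ⟨t, htQ, ht⟩ := exists_orderOf_eq_prime_of_sup_normal_eq_top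
    P.normalizer_sup_eq_top hp hM hN
  have htp : t ^ p = 1 := ht ▸ pow_orderOf_eq_one t
  have hcomm : ∀ h ∈ Q, h * t = t * h := fun h =>
    mul_comm_of_mem_normalizer_of_pow_prime_eq_one hp (fun d hd hmod => by
      obtain ⟨k, hk⟩ := IsPGroup.iff_card.mp (P.isPGroup'.map N.subtype)
      rw [hk] at hd hmod ⊢
      obtain ⟨j, hj, rfl⟩ := (Nat.dvd_prime_pow hq).mp hd
      rw [hpow k (hk ▸ Q.card_subgroup_dvd_card) j hj hmod]) htQ htp
  have horbit (ω : X) : q ^ a ∣ (MulAction.orbit Q ω).ncard := by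
    have horbit_eq : MulAction.orbit Q ω = MulAction.orbit P ω := by
      ext u
      constructor
      · rintro ⟨⟨_, h, hh, rfl⟩, rfl⟩
        exact ⟨⟨h, hh⟩, rfl⟩
      · rintro ⟨h, rfl⟩
        exact ⟨⟨h, Subgroup.mem_map_of_mem N.subtype h.2⟩, rfl⟩
    exact horbit_eq ▸ pow_dvd_ncard_orbit_sylow P hX ω
  have hcard := hfix _ (Finite.card_subtype_le _) (dvd_natCard_fixedBy_of_commute hcomm horbit)
    (natCard_fixedBy_modEq hp htp)
  have hone : t = 1 := FaithfulSMul.eq_of_smul_eq_smul fun ω : X => by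
    have huniv : MulAction.fixedBy X t = Set.univ :=
      (Set.eq_univ_iff_ncard _).mpr hcard
    rw [one_smul]
    exact huniv.ge (Set.mem_univ ω)
  exact hp.one_lt.ne (ht ▸ hone ▸ orderOf_one.symm)

theorem isPreprimitive_of_stabilizer_pretransitive [Finite X] [MulAction.IsPretransitive M X]
    (o : X) (A : Set X) (hoA : o ∉ A)
    (hA : ∀ u ∈ A, ∀ v ∈ A, ∃ g ∈ MulAction.stabilizer M o, g • u = v)
    (hA' : ∀ u ∉ insert o A, ∀ v ∉ insert o A, ∃ g ∈ MulAction.stabilizer M o, g • u = v)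
    (hcard : ¬ A.ncard + 1 ∣ Nat.card X) (hcard' : ¬ Nat.card X - A.ncard ∣ Nat.card X) :
    MulAction.IsPreprimitive M X := by
  refine MulAction.IsPreprimitive.of_isTrivialBlock_base o fun {B} hoB hB => ?_
  have hstable {u v : X} (hu : u ∈ B) (h : ∃ g ∈ MulAction.stabilizer M o, g • u = v) :
      v ∈ B := by
    obtain ⟨g, hg, rfl⟩ := h
    have hgB : g • B = B := hB.smul_eq_of_mem hoB (by rwa [hg])
    exact hgB ▸ Set.smul_mem_smul_set hu
  have hdvd := hB.ncard_dvd_card ⟨o, hoB⟩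
  by_cases hBA : ∃ u ∈ A, u ∈ B <;> by_cases hBA' : ∃ u ∉ insert o A, u ∈ B
  · obtain ⟨⟨u, huA, hu⟩, ⟨v, hvA, hv⟩⟩ := And.intro hBA hBA'
    refine .inr (Set.eq_univ_of_forall fun w => ?_)
    by_cases hw : w ∈ insert o A
    · exact hw.elim (· ▸ hoB) fun hwA => hstable hu (hA u huA w hwA)
    · exact hstable hv (hA' v hvA w hw)
  · obtain ⟨u, huA, hu⟩ := hBA
    have hBeq : B = insert o A := by
      refine Set.Subset.antisymm (fun w hw => by_contra fun hwA => hBA' ⟨w, hwA, hw⟩) ?_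
      exact Set.insert_subset hoB fun w hwA => hstable hu (hA u huA w hwA)
    rw [hBeq, Set.ncard_insert_of_notMem hoA] at hdvd
    exact absurd hdvd hcard
  · obtain ⟨v, hvA, hv⟩ := hBA'
    have hBeq : B = Aᶜ := by
      refine Set.Subset.antisymm (fun w hw hwA => hBA ⟨w, hwA, hw⟩) fun w hwA => ?_
      by_cases hwo : w = o
      · exact hwo ▸ hoB
      · exact hstable hv (hA' v hvA w (by simp_all))
    rw [hBeq, Set.ncard_compl] at hdvd
    exact absurd hdvd hcard'
  · refine .inl (Set.subsingleton_of_subset_singleton (a := o) fun w hw => ?_)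
    by_contra hwo
    exact hBA' ⟨w, fun hwA => hwA.elim hwo fun hwA => hBA ⟨w, hwA, hw⟩, hw⟩

theorem eq_one_of_commute_of_isPretransitive [FaithfulSMul M X] {H : Subgroup M}
    [MulAction.IsPretransitive H X] {o : X}
    (ho : ∀ u : X, (∀ h ∈ H, h • o = o → h • u = u) → u = o) {c : M}
    (hc : ∀ h ∈ H, h * c = c * h) : c = 1 := by
  have hco : c • o = o := ho _ fun h hh hho => by rw [← mul_smul, hc h hh, mul_smul, hho]
  refine FaithfulSMul.eq_of_smul_eq_smul fun u : X => ?_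
  obtain ⟨h, rfl⟩ := MulAction.exists_smul_eq H o u
  rw [Subgroup.smul_def, ← mul_smul, ← hc h h.2, mul_smul, hco, one_smul]

theorem smul_ne_of_isPretransitive_closure_pair {a b : M}
    [MulAction.IsPretransitive (Subgroup.closure {a, b}) X] (hcard : 2 < Nat.card X)
    (hb : b * b = 1) {p : X} (ha : a • p = p) : a • b • p ≠ b • p := fun hab => by
  have hle : Subgroup.closure {a, b} ≤ MulAction.stabilizer M ({p, b • p} : Set X) := by
    rw [Subgroup.closure_le]
    rintro _ (rfl | rfl) <;>
      simp [MulAction.mem_stabilizer_iff, Set.smul_set_insert, ha, hab, smul_smul, hb,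
        Set.pair_comm]
  have huniv : ({p, b • p} : Set X) = Set.univ := Set.eq_univ_of_forall fun q => by
    obtain ⟨g, rfl⟩ := MulAction.exists_smul_eq (Subgroup.closure {a, b}) p q
    exact MulAction.mem_stabilizer_iff.mp (hle g.2) ▸ Set.smul_mem_smul_set (Set.mem_insert p _)
  rw [← Set.ncard_univ, ← huniv] at hcard
  exact hcard.not_ge ((Set.ncard_insert_le _ _).trans_eq (by rw [Set.ncard_singleton]))

end GroupTheory

section CycleTypes

theorem cycleType_permOfCycles {n : ℕ} {cs : List (List (Fin n))} (hnodup : cs.flatten.Nodup)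
    (hlength : ∀ c ∈ cs, 2 ≤ c.length) :
    (permOfCycles cs).cycleType = (cs.map List.length : List ℕ) := by
  obtain ⟨hnodup, hdisjoint⟩ := List.nodup_flatten.mp hnodup
  rw [permOfCycles, Equiv.Perm.cycleType_eq (cs.map List.formPerm) rfl]
  · rw [List.map_map]
    refine congrArg _ (List.map_congr_left fun c hc => ?_)
    have hsupport := List.support_formPerm_of_nodup c (hnodup c hc) (by
      rintro a rfl
      exact absurd (hlength _ hc) (by simp))
    rw [Function.comp_apply, Function.comp_apply, hsupport,
      List.toFinset_card_of_nodup (hnodup c hc)]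
  · rintro _ hs
    obtain ⟨c, hc, rfl⟩ := List.mem_map.mp hs
    exact List.isCycle_formPerm (hnodup c hc) (hlength c hc)
  · rw [List.pairwise_map]
    exact hdisjoint.imp_of_mem fun ha hb hab => (List.formPerm_disjoint_iff
      (hnodup _ ha) (hnodup _ hb) (hlength _ ha) (hlength _ hb)).mpr hab

theorem cycleType_x : x.cycleType = Multiset.replicate 19 5 := by
  rw [x, cycleType_permOfCycles (by decide +kernel) (by decide +kernel)]
  decide +kernel

theorem cycleType_y : y.cycleType = Multiset.replicate 47 2 := by
  rw [y, cycleType_permOfCycles (by decide +kernel) (by decide +kernel)]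
  decide +kernel

/-- The cycles of `(x * y)⁻¹`. As everywhere in `Fin 100`, the point `100` is `0`. -/
def zCycles : List (List (Fin 100)) := [
  [0, 46, 78, 98, 76, 15], [4, 77, 25, 95, 69, 47], [5, 55, 56, 9, 22, 83],
  [6, 21, 42, 87, 62, 99], [16, 41, 70, 63, 92, 43], [18, 32, 28, 60, 37, 90],
  [19, 33, 54, 74, 53, 49], [23, 27, 97, 34, 71, 82], [26, 96, 45, 61, 31, 67],
  [29, 88, 65, 72, 73, 59], [1, 85, 81], [2, 94, 8], [3, 89, 24], [10, 48, 44], [12, 40, 84],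
  [13, 50, 58], [17, 66, 91], [30, 39, 51], [36, 79, 52], [57, 86, 93], [7, 35], [11, 68],
  [14, 80], [20, 64], [38, 75]]

theorem inv_x_mul_y_eq_permOfCycles : (x * y)⁻¹ = permOfCycles zCycles := by
  refine inv_eq_of_mul_eq_one_left (Equiv.ext ?_)
  decide +kernel

theorem cycleType_inv_x_mul_y : ((x * y)⁻¹).cycleType =
    Multiset.replicate 10 6 + Multiset.replicate 10 3 + Multiset.replicate 5 2 := by
  rw [inv_x_mul_y_eq_permOfCycles,
    cycleType_permOfCycles (by decide +kernel) (by decide +kernel)]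
  decide +kernel

theorem permInd_add_permInd_add_permInd :
    permInd x + permInd y + permInd (x * y)⁻¹ = 2 * (100 - 1) := by
  rw [permInd, permInd, permInd, cycleType_x, cycleType_y, cycleType_inv_x_mul_y]
  simp

theorem orderOf_x : orderOf x = 5 := by
  rw [← Equiv.Perm.lcm_cycleType, cycleType_x]
  decide +kernel

theorem orderOf_y : orderOf y = 2 := by
  rw [← Equiv.Perm.lcm_cycleType, cycleType_y]
  decide +kernel

theorem orderOf_inv_x_mul_y : orderOf (x * y)⁻¹ = 6 := by
  rw [← Equiv.Perm.lcm_cycleType, cycleType_inv_x_mul_y]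
  decide +kernel

theorem y_mul_y : y * y = 1 := by
  rw [← sq, ← orderOf_y, pow_orderOf_eq_one]

theorem sign_x : Equiv.Perm.sign x = 1 := by
  rw [Equiv.Perm.sign_of_cycleType, cycleType_x]
  decide +kernel

theorem sign_y : Equiv.Perm.sign y = -1 := by
  rw [Equiv.Perm.sign_of_cycleType, cycleType_y]
  decide +kernel

end CycleTypes

section Words

/-- The group generated by `x` and `y`, which turns out to be `Aut(HS)`. -/
abbrev autHS : Subgroup (Equiv.Perm (Fin 100)) := Subgroup.closure {x, y}

theorem x_mem_autHS : x ∈ autHS := Subgroup.subset_closure (by simp)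

theorem y_mem_autHS : y ∈ autHS := Subgroup.subset_closure (by simp)

/-- The list of the entries, each below `2 ^ width`, packed into one natural number, so that the
kernel can look entries up with its built-in arithmetic. -/
def pack (width : ℕ) (entries : List ℕ) : ℕ :=
  entries.foldr (fun a rest => a + rest <<< width) 0

/-- The `i`-th entry of a list packed with `7` binary digits per entry. -/
def entry (table i : ℕ) : ℕ := (table >>> (7 * i)) % 128

/-- The images of `0, …, 99` under `x`, to be read with `entry`. -/
def xTable : ℕ := pack 7 [
  57, 64, 20, 98, 96, 22, 67, 58, 54, 16, 70, 77, 17, 35, 6, 79, 87, 19, 7, 21, 81, 80, 28, 50,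
  72, 68, 99, 23, 78, 71, 74, 45, 73, 91, 31, 90, 25, 1, 69, 39, 14, 56, 49, 63, 46, 47, 62, 75,
  5, 2, 66, 30, 76, 51, 37, 10, 55, 93, 82, 18, 9, 61, 43, 44, 8, 29, 84, 97, 11, 65, 41, 38, 95,
  89, 94, 34, 24, 36, 48, 4, 12, 42, 59, 83, 27, 60, 15, 85, 88, 3, 33, 13, 92, 26, 53, 52, 86,
  40, 32, 0]

/-- The images of `0, …, 99` under `y`, to be read with `entry`. -/
def yTable : ℕ := pack 7 [
  86, 20, 64, 76, 45, 83, 26, 13, 74, 41, 63, 25, 66, 7, 21, 52, 62, 33, 35, 42, 1, 14, 60, 58,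
  73, 11, 6, 27, 98, 82, 53, 61, 59, 17, 67, 18, 95, 85, 47, 51, 80, 9, 19, 92, 78, 4, 99, 38,
  55, 94, 91, 39, 15, 30, 90, 48, 56, 57, 23, 32, 22, 31, 16, 10, 2, 88, 12, 34, 68, 72, 70, 75,
  69, 24, 8, 71, 3, 79, 44, 77, 40, 87, 29, 5, 97, 37, 0, 81, 65, 89, 54, 50, 43, 96, 49, 36, 93,
  84, 28, 46]

theorem val_x_apply : ∀ p : Fin 100, (x p : ℕ) = entry xTable p := by decide +kernel

theorem val_y_apply : ∀ p : Fin 100, (y p : ℕ) = entry yTable p := by decide +kernel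

attribute [irreducible] x y

/-- The element `x ^ e₁ * y * x ^ e₂ * y * ⋯` of `autHS` with exponents `es = [e₁, e₂, …]`. -/
def word (es : List ℕ) : Equiv.Perm (Fin 100) := (es.map fun e => x ^ e * y).prod

/-- The permutation `word es`, computed on natural numbers below `100`. -/
def wordMap (es : List ℕ) (p : ℕ) : ℕ :=
  es.foldr (fun e i => (entry xTable)^[e] (entry yTable i)) p

theorem word_mem_autHS (es : List ℕ) : word es ∈ autHS :=
  list_prod_mem fun _ h => by
    obtain ⟨e, -, rfl⟩ := List.mem_map.mp h
    exact mul_mem (pow_mem x_mem_autHS e) y_mem_autHS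

theorem val_x_pow_apply (e : ℕ) (p : Fin 100) :
    ((x ^ e) p : ℕ) = (entry xTable)^[e] p := by
  induction e generalizing p with
  | zero => rfl
  | succ e ih =>
    rw [pow_succ, Equiv.Perm.mul_apply, ih, val_x_apply, Function.iterate_succ_apply]

theorem val_word_apply (es : List ℕ) (p : Fin 100) : (word es p : ℕ) = wordMap es p := by
  induction es with
  | nil => rfl
  | cons e es ih =>
    calc (word (e :: es) p : ℕ) = ((x ^ e) (y (word es p)) : ℕ) := by
          simp [word, Equiv.Perm.mul_apply]
      _ = wordMap (e :: es) p := by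
          rw [val_x_pow_apply, val_y_apply, ih, wordMap, wordMap, List.foldr_cons]

theorem word_one_zero : word [1, 0] = x := by simp [word, mul_assoc, y_mul_y]

theorem word_append (es fs : List ℕ) : word (es ++ fs) = word es * word fs := by simp [word]

theorem word_flatten_replicate (n : ℕ) (es : List ℕ) :
    word (List.replicate n es).flatten = word es ^ n := by
  induction n with
  | zero => rfl
  | succ n ih => rw [List.replicate_succ, List.flatten_cons, word_append, ih, pow_succ']

theorem word_ext {es fs : List ℕ} (h : ∀ p : Fin 100, wordMap es p = wordMap fs p) :
    word es = word fs :=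
  Equiv.ext fun p => Fin.ext (by rw [val_word_apply, val_word_apply, h])

end Words

section Graph

/-- The adjacency matrix of the Higman–Sims graph whose edges are the images of `{0, 9}` under
`autHS`, with one bit mask per row. -/
def adjacencyTable : ℕ := pack 100 [
  0x28040000e84a049c011288a00, 0x010000198002d238228003e20, 0x000188840552c88d202241000,
  0x3040490000415c088d20006a0, 0x6731021000124800094380c00, 0x440990223108018140428800a,
  0x8200c02040408a02e04218f00, 0x8129006420002014221315808, 0x014902c20009403d050482040,
  0x0411064406900101000d4404b, 0x088c2084012c208400146005a, 0x00423d82150100411020000d3,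
  0x26c4660242080000814408086, 0x2430712444000c80003224102, 0x02448081116e4200184082280,
  0x013001c5003060001ca021061, 0x44102000922a54a101a0400c0, 0x80410c0032c2105121410a400,
  0x2160112b60000050144090604, 0x80806c040200b000a2a044131, 0x0080d083480880a844a020290,
  0x10c0000902a41060040c020f5, 0xc0229800380204001aa201700, 0x002c69921000609221c200200,
  0x40008a0a0210c10394c002481, 0x080c02180084031200459a80c, 0x100200408c01042c023865070,
  0x3241002005450844001d98002, 0x0000902d05048300120831119, 0x0810018040f008c3454480082,
  0x0606241095020200221348108, 0x0000202ac60080f720040c018, 0x14894010008018a861144c800,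
  0x68101200080d05001c08a00c6, 0x20642a0c06064414120100060, 0x003110911c8600f0001081048,
  0x32a44011080420000a1030b24, 0x25c11405210a10080a3800040, 0x041055111080130048c000585,
  0xc23020201224204210410010f, 0x5682800001300800c82860183, 0x28040d0421502100984310102,
  0x040cc244000847088a8260800, 0x83420640000102009a0912425, 0x83e2208040220864213000220,
  0x70a108022a1020c4052004042, 0x038104930110a040604412009, 0x00040443ba08211012800205c,
  0x022682c24c1000061002b000a, 0x0442920844820e29000888480, 0x888214006880004040181c11e,
  0x146e014030a00400091180046, 0x04a4800d62b2008020c000908, 0x1008416200012102c40434017,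
  0x05020542e0100009e1a204400, 0x1022091804900842200115521, 0x80487020100d1630021008214,
  0x20015e120c01811802021c400, 0x45aa321a0000002002802404d, 0x630020228109e004922220200,
  0x803042404a800432058004c24, 0x090a119001010a084812b1200, 0xc988000020283000cdc002a04,
  0x0548212c01205a01a04500001, 0x2980020c4010880c840c34820, 0x021062900405ca220004600a1,
  0x50090810110571000a0143041, 0x80e9da84008408000c4010003, 0xc80a2a0000010c0781034c002,
  0x8810000400e61e00081941920, 0x520200129801006241008a684, 0x821144c018492000493240002,
  0x8040806462680405942800012, 0x08860e90089200080980420e0, 0x68803818010698c0004008380,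
  0x74000028a200150082090cd04, 0xc28182000a0e802402084a808, 0x10000121b16030c0603001310,
  0x5028802800244ca60400a1a00, 0x07100061c0280220401ca080c, 0x1204004082706006a10542820,
  0x1001804128d001084c0893c00, 0x49020008a1320045100983048, 0x2910251080013050011504064,
  0x08062108c02006029080203b4, 0x20114025024cf190044400800, 0xc111102000019861442805401,
  0x22100401ce5280401028005a0, 0x10ce880a2100000ca2001a210, 0x0800040081499309c00c4a090,
  0x481000108810a182408265908, 0x0010016094414713100381400, 0x1004c8001ec40582000048192,
  0x0808190c20801599048005050, 0x880008800845a056140013230, 0x1661c06316004020222000401,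
  0x89103684400a821110c200008, 0x800a80c010a00223608043019, 0x004445c544c00218201410030,
  0x3404011b851041880004a00c0]

/-- The neighbours of the vertex `p`, as a bit mask. -/
def neighbors (p : ℕ) : ℕ := (adjacencyTable >>> (100 * p)) % 2 ^ 100

/-- The distance in the Higman–Sims graph, which has diameter `2`. -/
def distance (p q : ℕ) : ℕ := bif p.beq q then 0 else 2 - (adjacencyTable >>> (100 * p + q)) % 2

/-- The vertices at distance `d ≤ 2` from `p`, as a bit mask. -/
def sphere (p : ℕ) : ℕ → ℕ
  | 0 => 1 <<< p
  | 1 => neighbors p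
  | _ => (2 ^ 100 - 1) ^^^ neighbors p ^^^ (1 <<< p)

theorem testBit_sphere_distance :
    ∀ p q : Fin 100, (sphere p (distance p q)).testBit q = true := by
  decide +kernel

theorem distance_comm : ∀ p q : Fin 100, distance p q = distance q p := by
  decide +kernel

/-- The automorphism group of the Higman–Sims graph, as the group of its isometries. -/
def graphAut : Subgroup (Equiv.Perm (Fin 100)) where
  carrier := {g | ∀ p q : Fin 100, distance (g p) (g q) = distance p q}
  mul_mem' hg hh p q := (hg _ _).trans (hh p q)
  one_mem' _ _ := rfl
  inv_mem' {g} hg p q := by simpa using (hg (g⁻¹ p) (g⁻¹ q)).symm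

theorem x_mem_graphAut : x ∈ graphAut := by
  have hcheck : ∀ p q : Fin 100,
      distance (entry xTable p) (entry xTable q) = distance p q := by decide +kernel
  exact fun p q => by rw [val_x_apply, val_x_apply, hcheck]

theorem y_mem_graphAut : y ∈ graphAut := by
  have hcheck : ∀ p q : Fin 100,
      distance (entry yTable p) (entry yTable q) = distance p q := by decide +kernel
  exact fun p q => by rw [val_y_apply, val_y_apply, hcheck]

theorem autHS_le_graphAut : autHS ≤ graphAut := by
  rw [autHS, Subgroup.closure_le]
  rintro g (rfl | rfl)
  exacts [x_mem_graphAut, y_mem_graphAut]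

/-- The elements of the bit mask `m` below `100`. -/
def bits (m : ℕ) : List ℕ := (List.range 100).filter fun i => (m / 2 ^ i % 2).beq 1

theorem mem_bits {m : ℕ} {p : Fin 100} : (p : ℕ) ∈ bits m ↔ m.testBit p = true := by
  simp [bits, p.isLt, Nat.testBit_eq_decide_div_mod_eq]

/-- The list `F` is part of the graph of the permutation `g`. -/
def Agrees (g : Equiv.Perm (Fin 100)) (F : List (ℕ × ℕ)) : Prop :=
  ∀ f ∈ F, ∃ p : Fin 100, f = (↑p, ↑(g p))

/-- The possible images of `p` under the graph automorphisms that agree with `F`, as a bit mask. -/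
def candidates (F : List (ℕ × ℕ)) (p : ℕ) : ℕ :=
  F.foldr (fun f m => sphere f.2 (distance f.1 p) &&& m) (2 ^ 100 - 1)

theorem testBit_candidates {g : Equiv.Perm (Fin 100)} (hg : g ∈ graphAut) {F : List (ℕ × ℕ)}
    (hF : Agrees g F) (p : Fin 100) : (candidates F p).testBit (g p) = true := by
  induction F with
  | nil => rw [candidates, List.foldr_nil, Nat.testBit_two_pow_sub_one, decide_eq_true (g p).isLt]
  | cons f F ih =>
    obtain ⟨q, rfl⟩ := hF f List.mem_cons_self
    have hsphere : (sphere (g q) (distance q p)).testBit (g p) = true := by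
      rw [← hg q p]
      exact testBit_sphere_distance (g q) (g p)
    have hrest := ih fun f hf => hF f (List.mem_cons_of_mem _ hf)
    rw [candidates] at hrest
    rw [candidates, List.foldr_cons, Nat.testBit_and, hsphere, hrest, Bool.and_self]

end Graph

section Orbits

theorem length_bits (m : ℕ) :
    (bits m).length = {p : Fin 100 | m.testBit p = true}.ncard := by
  have himage : Fin.val '' {p : Fin 100 | m.testBit p = true} = {q | q ∈ bits m} := by
    ext q
    simp [bits, Fin.exists_iff, and_comm, Nat.testBit_eq_decide_div_mod_eq]
  have hnodup : (bits m).Nodup := List.nodup_range.filter _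
  rw [← Set.ncard_image_of_injective _ Fin.val_injective, himage,
    ← List.toFinset_card_of_nodup hnodup, ← Set.ncard_coe_finset, List.coe_toFinset]

/-- The bit mask `seen` enlarged by what the maps in `gens` reach from `p` outside `seen`, by
depth-first search to the depth given by the first number. -/
def reach (gens : List (ℕ → ℕ)) : ℕ → ℕ → ℕ → ℕ
  | 0, _, seen => seen
  | n + 1, p, seen =>
    if seen.testBit p then seen
    else gens.foldl (fun s f => reach gens n (f p) s) (seen ||| 1 <<< p)

theorem reach_induction {gens : List (ℕ → ℕ)} {P : ℕ → Prop}
    (hgens : ∀ f ∈ gens, ∀ p, P p → P (f p)) {n p seen : ℕ} (hp : P p)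
    (hseen : ∀ i, seen.testBit i = true → P i) {i : ℕ}
    (hi : (reach gens n p seen).testBit i = true) : P i := by
  induction n generalizing p seen i with
  | zero => exact hseen i hi
  | succ n ih =>
    rw [reach] at hi
    split at hi
    · exact hseen i hi
    · refine List.foldlRecOn (motive := fun s : ℕ => ∀ i, s.testBit i = true → P i) gens _ ?_ ?_
        i hi
      · intro i hi
        rw [Nat.testBit_or, Bool.or_eq_true, Nat.one_shiftLeft, Nat.testBit_two_pow,
          decide_eq_true_eq] at hi
        exact hi.elim (hseen i) fun h => h ▸ hp
      · exact fun s hs f hf i hi => ih (hgens f hf p hp) hs hi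

theorem exists_mem_apply_eq_of_testBit_reach {H : Subgroup (Equiv.Perm (Fin 100))}
    {ws : List (List ℕ)} (hws : ∀ w ∈ ws, word w ∈ H) {n : ℕ} {p q : Fin 100}
    (hq : (reach (ws.map wordMap) n p 0).testBit q = true) : ∃ h ∈ H, h p = q := by
  obtain ⟨h, hh, hhq⟩ := reach_induction (P := fun i => ∃ h ∈ H, (h p : ℕ) = i)
    (fun f hf i ⟨h, hh, hi⟩ => by
      obtain ⟨w, hw, rfl⟩ := List.mem_map.mp hf
      exact ⟨word w * h, mul_mem (hws w hw) hh, by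
        rw [Equiv.Perm.mul_apply, val_word_apply, hi]⟩)
    ⟨1, one_mem H, rfl⟩ (by simp) hq
  exact ⟨h, hh, Fin.ext hhq⟩

end Orbits

section Order

/-- Exponents of words that generate every pointwise stabilizer in the chain belonging to `base`. -/
def strongGenerators : List (List ℕ) := [
  [0], [1, 0], [3, 4], [0, 1, 4, 4, 3, 3], [0, 1, 1, 4, 4, 3, 4],
  [0, 1, 4, 3, 2, 4, 4, 2, 2, 1, 4], [0, 3, 4, 1, 2, 2, 2, 3, 3, 2, 1, 2],
  [0, 2, 2, 1, 3, 3, 1, 3, 3, 3, 2, 2], [0, 1, 1, 4, 3, 3, 4, 3, 3, 4, 3, 2, 4]]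

/-- The points whose pointwise stabilizers are computed one after the other. The first eight are
already a base for `autHS`. -/
def base : List (Fin 100) := [0, 9, 2, 21, 38, 39, 43, 53] ++ List.finRange 100

/-- The strong generators that fix every point of `F`. -/
def generatorsFixing (F : List (Fin 100)) : List (List ℕ) :=
  strongGenerators.filter fun w => F.all fun p => wordMap w p == p

/-- The pointwise stabilizer of `F` in `autHS`. -/
def pointwiseStabilizer (F : List (Fin 100)) : Subgroup (Equiv.Perm (Fin 100)) :=
  autHS ⊓ fixingSubgroup (Equiv.Perm (Fin 100)) {p | p ∈ F}

/-- The order of `pointwiseStabilizer F` as the product of the orbit lengths along the chain of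
stabilizers given by `bs`. It is `0` unless each of these orbits, computed from the strong
generators, is as large as the graph permits. -/
def chainOrder : List (Fin 100) → List (Fin 100) → ℕ
  | _, [] => 1
  | F, b :: bs =>
    let orbit := candidates (F.map fun p : Fin 100 => ((p : ℕ), (p : ℕ))) b
    if orbit = reach ((generatorsFixing F).map wordMap) 101 b 0 then
      (bits orbit).length * chainOrder (b :: F) bs
    else 0

theorem mem_pointwiseStabilizer {F : List (Fin 100)} {g : Equiv.Perm (Fin 100)} :
    g ∈ pointwiseStabilizer F ↔ g ∈ autHS ∧ ∀ p ∈ F, g p = p := by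
  simp [pointwiseStabilizer, mem_fixingSubgroup_iff]

theorem word_mem_pointwiseStabilizer {F : List (Fin 100)} {w : List ℕ}
    (hw : w ∈ generatorsFixing F) : word w ∈ pointwiseStabilizer F := by
  refine mem_pointwiseStabilizer.mpr ⟨word_mem_autHS w, fun p hp => Fin.ext ?_⟩
  rw [val_word_apply]
  exact beq_iff_eq.mp (List.all_eq_true.mp (List.mem_filter.mp hw).2 p hp)

theorem pointwiseStabilizer_cons (F : List (Fin 100)) (b : Fin 100) :
    pointwiseStabilizer (b :: F) =
      pointwiseStabilizer F ⊓ MulAction.stabilizer (Equiv.Perm (Fin 100)) b := by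
  ext g
  simp [mem_pointwiseStabilizer, and_comm, and_left_comm]

theorem ncard_orbit_pointwiseStabilizer {F : List (Fin 100)} {b : Fin 100} {orbit : ℕ}
    (hcandidates : orbit = candidates (F.map fun p : Fin 100 => ((p : ℕ), (p : ℕ))) b)
    (hreach : orbit = reach ((generatorsFixing F).map wordMap) 101 b 0) :
    (MulAction.orbit (pointwiseStabilizer F) b).ncard = (bits orbit).length := by
  rw [length_bits]
  congr 1
  ext q
  constructor
  · rintro ⟨⟨g, hg⟩, rfl⟩
    obtain ⟨hgG, hgF⟩ := mem_pointwiseStabilizer.mp hg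
    rw [hcandidates]
    refine testBit_candidates (autHS_le_graphAut hgG) (fun f hf => ?_) b
    obtain ⟨p, hp, rfl⟩ := List.mem_map.mp hf
    exact ⟨p, by rw [hgF p hp]⟩
  · rintro (hq : orbit.testBit q = true)
    obtain ⟨g, hg, rfl⟩ := exists_mem_apply_eq_of_testBit_reach
      (fun w => word_mem_pointwiseStabilizer) (hreach ▸ hq)
    exact ⟨⟨g, hg⟩, rfl⟩

theorem natCard_pointwiseStabilizer {F bs : List (Fin 100)} (hall : ∀ p, p ∈ F ∨ p ∈ bs)
    (hchain : chainOrder F bs ≠ 0) : Nat.card (pointwiseStabilizer F) = chainOrder F bs := by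
  induction bs generalizing F with
  | nil =>
    have hbot : pointwiseStabilizer F = ⊥ := (Subgroup.eq_bot_iff_forall _).mpr fun g hg =>
      Equiv.ext fun p => (mem_pointwiseStabilizer.mp hg).2 p
        ((hall p).resolve_right List.not_mem_nil)
    rw [hbot, Subgroup.card_bot, chainOrder]
  | cons b bs ih =>
    rw [chainOrder] at hchain ⊢
    split at hchain
    case isFalse => exact absurd rfl hchain
    case isTrue hreach =>
      have hall' (p : Fin 100) : p ∈ b :: F ∨ p ∈ bs := by
        have := hall p
        simp only [List.mem_cons] at this ⊢
        tauto
      rw [if_pos hreach, natCard_eq_ncard_orbit_mul_natCard_inf_stabilizer _ b,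
        ← pointwiseStabilizer_cons, ncard_orbit_pointwiseStabilizer rfl hreach,
        ih hall' (right_ne_zero_of_mul hchain)]

theorem natCard_autHS : Nat.card autHS = 88704000 := by
  have hchain : chainOrder [] base = 88704000 := by decide +kernel
  have hall (p : Fin 100) : p ∈ [] ∨ p ∈ base :=
    .inr (List.mem_append_right _ (List.mem_finRange p))
  have hnil : pointwiseStabilizer [] = autHS := by simp [pointwiseStabilizer]
  rw [← hnil, natCard_pointwiseStabilizer hall (by rw [hchain]; norm_num), hchain]

theorem autHS_ne_alternatingGroup : autHS ≠ alternatingGroup (Fin 100) := fun h => by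
  have hy := Equiv.Perm.mem_alternatingGroup.mp (h ▸ y_mem_autHS)
  rw [sign_y] at hy
  exact absurd hy (by decide)

theorem autHS_ne_top : autHS ≠ ⊤ := fun h => by
  have hcard := natCard_autHS
  rw [h, Subgroup.card_top, Nat.card_eq_fintype_card, Fintype.card_perm, Fintype.card_fin] at hcard
  exact absurd hcard (by decide +kernel)

end Order

section SimpleGroup

/-- The group of even permutations in `autHS`, which turns out to be the Higman–Sims group. -/
abbrev HS : Subgroup (Equiv.Perm (Fin 100)) := alternatingGroup (Fin 100) ⊓ autHS

/-- The strong generators of even length that fix every point of `F`. -/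
def evenGeneratorsFixing (F : List (Fin 100)) : List (List ℕ) :=
  (generatorsFixing F).filter fun w => w.length % 2 == 0

theorem sign_word (es : List ℕ) : Equiv.Perm.sign (word es) = (-1) ^ es.length := by
  induction es with
  | nil => simp [word]
  | cons e es ih =>
    rw [← List.singleton_append, word_append, map_mul, ih, List.length_append, pow_add]
    simp [word, sign_x, sign_y]

theorem word_mem_HS_inf_pointwiseStabilizer {F : List (Fin 100)} {w : List ℕ}
    (hw : w ∈ evenGeneratorsFixing F) : word w ∈ HS ⊓ pointwiseStabilizer F := by
  obtain ⟨hfix, heven⟩ := List.mem_filter.mp hw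
  refine ⟨⟨Equiv.Perm.mem_alternatingGroup.mpr ?_, word_mem_autHS w⟩,
    word_mem_pointwiseStabilizer hfix⟩
  rw [sign_word]
  exact (Nat.even_iff.mpr (beq_iff_eq.mp heven)).neg_one_pow

theorem exists_mem_HS_inf_pointwiseStabilizer_apply_eq {F : List (Fin 100)} {r u v : Fin 100}
    (hu : (reach ((evenGeneratorsFixing F).map wordMap) 101 r 0).testBit u = true)
    (hv : (reach ((evenGeneratorsFixing F).map wordMap) 101 r 0).testBit v = true) :
    ∃ g ∈ HS ⊓ pointwiseStabilizer F, g u = v := by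
  obtain ⟨g, hg, rfl⟩ := exists_mem_apply_eq_of_testBit_reach
    (fun w => word_mem_HS_inf_pointwiseStabilizer) hu
  obtain ⟨h, hh, rfl⟩ := exists_mem_apply_eq_of_testBit_reach
    (fun w => word_mem_HS_inf_pointwiseStabilizer) hv
  exact ⟨h * g⁻¹, mul_mem hh (inv_mem hg), by simp⟩

instance isPretransitive_HS : MulAction.IsPretransitive HS (Fin 100) := by
  have hreach : reach ((evenGeneratorsFixing []).map wordMap) 101 (0 : Fin 100) 0 =
      2 ^ 100 - 1 := by
    decide +kernel
  have hall (p : Fin 100) :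
      (reach ((evenGeneratorsFixing []).map wordMap) 101 (0 : Fin 100) 0).testBit p = true := by
    rw [hreach, Nat.testBit_two_pow_sub_one, decide_eq_true p.isLt]
  refine ⟨fun u v => ?_⟩
  obtain ⟨g, hg, hguv⟩ := exists_mem_HS_inf_pointwiseStabilizer_apply_eq (hall u) (hall v)
  exact ⟨⟨g, hg.1⟩, hguv⟩

theorem exists_mem_stabilizer_zero_apply_eq {r u v : Fin 100} {orbit : ℕ}
    (hreach : reach ((evenGeneratorsFixing [0]).map wordMap) 101 r 0 = orbit)
    (hu : orbit.testBit u = true) (hv : orbit.testBit v = true) :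
    ∃ g ∈ MulAction.stabilizer HS (0 : Fin 100), g • u = v := by
  subst hreach
  obtain ⟨g, hg, hguv⟩ := exists_mem_HS_inf_pointwiseStabilizer_apply_eq hu hv
  exact ⟨⟨g, hg.1⟩, (mem_pointwiseStabilizer.mp hg.2).2 0 List.mem_cons_self, hguv⟩

/- The stabilizer of `0` has the orbits `{0}`, the `22` neighbours and the `77` non-neighbours
of `0`, while neither `23` nor `78` divides `100`. -/
instance isPreprimitive_HS : MulAction.IsPreprimitive HS (Fin 100) := by
  have hneighbors : reach ((evenGeneratorsFixing [0]).map wordMap) 101 (9 : Fin 100) 0 =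
      neighbors (0 : Fin 100) := by decide +kernel
  have hothers : reach ((evenGeneratorsFixing [0]).map wordMap) 101 (2 : Fin 100) 0 =
      sphere (0 : Fin 100) 2 := by decide +kernel
  have hcompl : ∀ p : Fin 100, p ≠ 0 → (neighbors (0 : Fin 100)).testBit p = false →
      (sphere (0 : Fin 100) 2).testBit p = true := by decide +kernel
  have hcompl' {p : Fin 100}
      (hp : p ∉ insert 0 {q : Fin 100 | (neighbors (0 : Fin 100)).testBit q = true}) :
      (sphere (0 : Fin 100) 2).testBit p = true := by
    rw [Set.mem_insert_iff, not_or] at hp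
    exact hcompl p hp.1 (Bool.not_eq_true _ ▸ hp.2)
  have hncard : {q : Fin 100 | (neighbors (0 : Fin 100)).testBit q = true}.ncard = 22 := by
    rw [← length_bits]
    decide +kernel
  refine isPreprimitive_of_stabilizer_pretransitive 0
    {q : Fin 100 | (neighbors (0 : Fin 100)).testBit q = true} ?_
    (fun u hu v hv => exists_mem_stabilizer_zero_apply_eq hneighbors hu hv)
    (fun u hu v hv => exists_mem_stabilizer_zero_apply_eq hothers (hcompl' hu) (hcompl' hv)) ?_ ?_
  · change ¬(neighbors (0 : Fin 100)).testBit (0 : Fin 100) = true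
    decide +kernel
  all_goals
    rw [hncard, Nat.card_eq_fintype_card, Fintype.card_fin]
    norm_num

theorem isPreprimitive_autHS : IsPreprimitive autHS (Fin 100) := by
  let ι : HS →* autHS := Subgroup.inclusion inf_le_right
  refine ⟨⟨fun u v => ?_⟩, fun B hB => ?_⟩
  · obtain ⟨g, hg⟩ := MulAction.exists_smul_eq HS u v
    exact ⟨ι g, hg⟩
  · have hBHS : MulAction.IsBlock HS B := fun g h => hB (g₁ := ι g) (g₂ := ι h)
    exact MulAction.IsPreprimitive.isTrivialBlock_of_isBlock hBHS

theorem mem_HS_of_pow_eleven_eq_one {t : Equiv.Perm (Fin 100)} (ht : t ∈ autHS)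
    (hpow : t ^ 11 = 1) : t ∈ HS := by
  refine ⟨Equiv.Perm.mem_alternatingGroup.mpr ?_, ht⟩
  have hsign : Equiv.Perm.sign t ^ 11 = 1 := by rw [← map_pow, hpow, map_one]
  rcases Int.units_eq_one_or (Equiv.Perm.sign t) with h | h
  · exact h
  · rw [h] at hsign
    exact absurd hsign (by decide)

/-- Exponents of an element `t` of order `11` for which `t⁻¹ * x` has order `11` as well. -/
def elevenWord : List ℕ := [2, 4, 3, 4]

/-- Exponents of `t⁻¹ * x`, where `t = word elevenWord`. -/
def elevenCofactor : List ℕ := [0, 1, 2, 1, 4, 0]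

theorem word_elevenWord_pow : word elevenWord ^ 11 = 1 := by
  rw [← word_flatten_replicate]
  exact word_ext (fs := []) (by decide +kernel)

theorem word_elevenCofactor_pow : word elevenCofactor ^ 11 = 1 := by
  rw [← word_flatten_replicate]
  exact word_ext (fs := []) (by decide +kernel)

theorem word_elevenWord_mul_word_elevenCofactor : word elevenWord * word elevenCofactor = x := by
  rw [← word_append, ← word_one_zero]
  exact word_ext (by decide +kernel)

theorem word_elevenWord_ne_one : word elevenWord ≠ 1 := fun h => by
  have h0 := val_word_apply elevenWord 0
  rw [h] at h0
  exact absurd h0 (by decide +kernel)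

theorem HS_le_closure_x_conj : HS ≤ Subgroup.closure {x, y * x * y} := by
  rintro g ⟨heven, hg⟩
  have hle : Subgroup.closure {x, y * x * y} ≤ alternatingGroup (Fin 100) := by
    rw [Subgroup.closure_le]
    rintro _ (rfl | rfl) <;> simp [Equiv.Perm.mem_alternatingGroup, sign_x, sign_y]
  refine (mem_closure_conj_pair_or_mul_mem y_mul_y hg).resolve_right fun hyg => ?_
  have hsign := Equiv.Perm.mem_alternatingGroup.mp (hle hyg)
  rw [map_mul, sign_y, Equiv.Perm.mem_alternatingGroup.mp heven] at hsign
  exact absurd hsign (by decide)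

theorem closure_pow_eleven_eq_one_eq_top : Subgroup.closure {t : HS | t ^ 11 = 1} = ⊤ := by
  have hmem {t : Equiv.Perm (Fin 100)} (ht : t ∈ autHS) (hpow : t ^ 11 = 1) :
      t ∈ (Subgroup.closure {t : HS | t ^ 11 = 1}).map HS.subtype :=
    ⟨⟨t, mem_HS_of_pow_eleven_eq_one ht hpow⟩, Subgroup.subset_closure (Subtype.ext hpow), rfl⟩
  have hmem_conj {t : Equiv.Perm (Fin 100)} (ht : t ∈ autHS) (hpow : t ^ 11 = 1) :
      y * t * y⁻¹ ∈ (Subgroup.closure {t : HS | t ^ 11 = 1}).map HS.subtype :=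
    hmem (mul_mem (mul_mem y_mem_autHS ht) (inv_mem y_mem_autHS)) (by rw [conj_pow, hpow]; group)
  have hle : HS ≤ (Subgroup.closure {t : HS | t ^ 11 = 1}).map HS.subtype := by
    refine HS_le_closure_x_conj.trans ((Subgroup.closure_le _).mpr ?_)
    rintro _ (rfl | rfl)
    · rw [← word_elevenWord_mul_word_elevenCofactor]
      exact mul_mem (hmem (word_mem_autHS _) word_elevenWord_pow)
        (hmem (word_mem_autHS _) word_elevenCofactor_pow)
    · have hconj : y * x * y =
          y * word elevenWord * y⁻¹ * (y * word elevenCofactor * y⁻¹) := by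
        rw [conj_mul, word_elevenWord_mul_word_elevenCofactor,
          inv_eq_of_mul_eq_one_left y_mul_y]
      rw [hconj]
      exact mul_mem (hmem_conj (word_mem_autHS _) word_elevenWord_pow)
        (hmem_conj (word_mem_autHS _) word_elevenCofactor_pow)
  refine (Subgroup.eq_top_iff' _).mpr fun g => ?_
  obtain ⟨h, hh, hhg⟩ := hle g.2
  exact Subtype.ext hhg ▸ hh

theorem eleven_dvd_natCard_HS : 11 ∣ Nat.card HS := by
  have hprime : Fact (Nat.Prime 11) := ⟨by norm_num⟩
  have horder : orderOf (word elevenWord) = 11 :=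
    orderOf_eq_prime word_elevenWord_pow word_elevenWord_ne_one
  rw [← horder, ← Subgroup.orderOf_mk _
    (mem_HS_of_pow_eleven_eq_one (word_mem_autHS _) word_elevenWord_pow)]
  exact orderOf_dvd_natCard _

theorem natCard_HS_dvd : Nat.card HS ∣ 88704000 :=
  natCard_autHS ▸ Subgroup.card_dvd_of_le inf_le_right

theorem eleven_dvd_natCard_of_normal (N : Subgroup HS) [N.Normal] (hN : N ≠ ⊥) :
    11 ∣ Nat.card N := by
  have hX : Nat.card (Fin 100) = 100 := by simp
  have hfixed : MulAction.fixedPoints N (Fin 100) ≠ Set.univ := fun huniv => hN <|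
    (Subgroup.eq_bot_iff_forall _).mpr fun g hg => Subtype.ext <| Equiv.ext fun p =>
      (huniv ▸ Set.mem_univ p : p ∈ MulAction.fixedPoints N (Fin 100)) ⟨g, hg⟩
  have := MulAction.IsQuasiPreprimitive.isPretransitive_of_normal hfixed
  refine prime_dvd_natCard_of_isPretransitive_normal (X := Fin 100) N (q := 5) (a := 2)
    (by norm_num) (by norm_num) eleven_dvd_natCard_HS (by rw [hX]; norm_num) ?_ ?_
  · intro k hk j hj hmod
    have hk3 : k < 4 := by
      by_contra! hk4
      exact absurd ((pow_dvd_pow 5 hk4).trans (hk.trans natCard_HS_dvd)) (by norm_num)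
    interval_cases k <;> interval_cases j <;> first | rfl | exact absurd hmod (by decide)
  · rw [hX]
    rintro _ hm ⟨c, rfl⟩ hmod
    have hc : c ≤ 4 := by omega
    interval_cases c <;> first | rfl | exact absurd hmod (by decide)

instance isSimpleGroup_HS : IsSimpleGroup HS := by
  have : Nontrivial HS := ⟨⟨⟨_, mem_HS_of_pow_eleven_eq_one (word_mem_autHS _)
    word_elevenWord_pow⟩, 1, fun h => word_elevenWord_ne_one (congrArg Subtype.val h)⟩⟩
  refine isSimpleGroup_of_prime_dvd_card_normal (p := 11) (by norm_num)
    (fun h => absurd (h.trans natCard_HS_dvd) (by norm_num)) closure_pow_eleven_eq_one_eq_top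
    fun N _ hN => eleven_dvd_natCard_of_normal N hN

theorem eq_one_of_commute_HS {c : Equiv.Perm (Fin 100)} (hc : ∀ h ∈ HS, h * c = c * h) :
    c = 1 := by
  have hmoved : ∀ u : Fin 100, (∀ w ∈ evenGeneratorsFixing [0], wordMap w u = u) → u = 0 := by
    decide +kernel
  refine eq_one_of_commute_of_isPretransitive (o := (0 : Fin 100)) (fun u hu => ?_) hc
  refine hmoved u fun w hw => ?_
  obtain ⟨hHS, hfix⟩ := word_mem_HS_inf_pointwiseStabilizer hw
  rw [← val_word_apply]
  exact congrArg Fin.val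
    (hu _ hHS ((mem_pointwiseStabilizer.mp hfix).2 0 List.mem_cons_self))

theorem x_mul_conj_ne : x * (y * x * y) ≠ y * x * y * x := fun h => by
  have hword : word [1, 1] = word [0, 1, 1, 0] := by
    simpa [word, mul_assoc, y_mul_y] using h
  have h0 := congrArg (fun g : Equiv.Perm (Fin 100) => (g 0 : ℕ)) hword
  simp only [val_word_apply] at h0
  exact absurd h0 (by decide +kernel)

theorem exists_simple_normal_subgroup_autHS :
    ∃ S : Subgroup autHS, S.Normal ∧ IsSimpleGroup S ∧ (∃ a b : S, a * b ≠ b * a) ∧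
      Subgroup.centralizer (S : Set autHS) = ⊥ := by
  have hx : x ∈ HS := ⟨sign_x, x_mem_autHS⟩
  have hyxy : y * x * y ∈ HS := ⟨by simp [Equiv.Perm.mem_alternatingGroup, sign_x, sign_y],
    mul_mem (mul_mem y_mem_autHS x_mem_autHS) y_mem_autHS⟩
  refine ⟨HS.subgroupOf autHS, ?_, ?_, ⟨⟨⟨x, hx.2⟩, hx⟩, ⟨⟨_, hyxy.2⟩, hyxy⟩, fun h => ?_⟩, ?_⟩
  · rw [Subgroup.inf_subgroupOf_right]
    infer_instance
  · exact (Subgroup.subgroupOfEquivOfLe (inf_le_right : HS ≤ autHS)).isSimpleGroup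
  · exact x_mul_conj_ne (congrArg (fun g : HS.subgroupOf autHS => (g : Equiv.Perm (Fin 100))) h)
  · refine (Subgroup.eq_bot_iff_forall _).mpr fun c hc => Subtype.ext (eq_one_of_commute_HS ?_)
    exact fun h hh => congrArg Subtype.val (Subgroup.mem_centralizer_iff.mp hc ⟨h, hh.2⟩ hh)

end SimpleGroup

section Rationality

theorem exists_conj_x_eq_zpow (k : ℤ) (hk : Int.gcd k (orderOf x) = 1) :
    ∃ h ∈ autHS, h * x * h⁻¹ = x ^ k := by
  let h := word [0, 1, 4, 3, 1, 2, 2, 1, 2, 4, 3, 1]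
  have hconj : h * x = x ^ 2 * h := by
    rw [← word_one_zero, ← word_flatten_replicate, ← word_append, ← word_append]
    exact word_ext (by decide +kernel)
  refine exists_mem_conj_eq_zpow (r := 2) (word_mem_autHS _) (mul_inv_eq_of_eq_mul hconj) ?_ k hk
  rw [orderOf_x]
  decide

theorem exists_conj_y_eq_zpow (k : ℤ) (hk : Int.gcd k (orderOf y) = 1) :
    ∃ h ∈ autHS, h * y * h⁻¹ = y ^ k := by
  refine exists_mem_conj_eq_zpow (r := 1) (one_mem autHS) (by group) ?_ k hk
  rw [orderOf_y]
  decide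

theorem exists_conj_inv_x_mul_y_eq_zpow (k : ℤ) (hk : Int.gcd k (orderOf (x * y)⁻¹) = 1) :
    ∃ h ∈ autHS, h * (x * y)⁻¹ * h⁻¹ = (x * y)⁻¹ ^ k := by
  let h := word [0, 2, 1, 2, 2, 2, 3, 3, 2, 3]
  have hone : word [1] = x * y := by simp [word]
  have hinvert : x * y * h * (x * y) = h := by
    rw [← hone, ← word_append, ← word_append]
    exact word_ext (by decide +kernel)
  have hconj : h * (x * y)⁻¹ * h⁻¹ = (x * y)⁻¹ ^ (-1 : ℤ) := by
    rw [zpow_neg_one, inv_inv, mul_inv_eq_iff_eq_mul, mul_inv_eq_iff_eq_mul, hinvert]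
  refine exists_mem_conj_eq_zpow (word_mem_autHS _) hconj ?_ k hk
  rw [orderOf_inv_x_mul_y]
  decide

theorem exists_conj_eq_zpow {g : Equiv.Perm (Fin 100)}
    (hg : g ∈ ({x, y, (x * y)⁻¹} : Set (Equiv.Perm (Fin 100)))) (k : ℤ)
    (hk : Int.gcd k (orderOf g) = 1) : ∃ h ∈ autHS, h * g * h⁻¹ = g ^ k := by
  rcases hg with hg | hg | hg <;> subst hg
  exacts [exists_conj_x_eq_zpow k hk, exists_conj_y_eq_zpow k hk,
    exists_conj_inv_x_mul_y_eq_zpow k hk]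

end Rationality

section Rigidity

/-- The distances from `s` to `g p`, `g (g p)`, … are the entries of the list. -/
def Follows (g : Equiv.Perm (Fin 100)) (s : Fin 100) : Fin 100 → List ℕ → Prop
  | _, [] => True
  | p, d :: pattern => distance s (g p) = d ∧ Follows g s (g p) pattern

/-- The distances from a point to its successive images under `x * y`, as far as the search for
partners of `x` uses them, for points in cycles of length `6`, `3` and `2`. -/
def walkPatterns : List (List ℕ) := [[1, 2, 2], [2, 2, 0], [2, 0]]

theorem Follows.conj {c g : Equiv.Perm (Fin 100)} (hc : c ∈ graphAut) {s p : Fin 100}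
    {pattern : List ℕ} (h : Follows g s p pattern) :
    Follows (c * g * c⁻¹) (c s) (c p) pattern := by
  induction pattern generalizing p with
  | nil => trivial
  | cons d pattern ih =>
    have happly : (c * g * c⁻¹) (c p) = c (g p) := by simp
    rw [Follows, happly]
    exact ⟨(hc s (g p)).trans h.1, ih h.2⟩

instance decidableFollows (g : Equiv.Perm (Fin 100)) (s : Fin 100) :
    (p : Fin 100) → (pattern : List ℕ) → Decidable (Follows g s p pattern)
  | _, [] => isTrue trivial
  | p, _ :: pattern =>
    have := decidableFollows g s (g p) pattern
    inferInstanceAs (Decidable (_ ∧ _))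

theorem exists_follows_x_mul_y :
    ∀ s : Fin 100, ∃ pattern ∈ walkPatterns, Follows (x * y) s s pattern := by
  decide +kernel

/-- The graph automorphism `g` shares those properties of `y` that are preserved by conjugation in
`autHS` and that a computer search can exploit one point at a time: it has order at most `2`, and
`x * g` moves points like `x * y` does. The last condition holds if `x` and `g` generate a
transitive group. -/
structure IsPartner (g : Equiv.Perm (Fin 100)) : Prop where
  mem_graphAut : g ∈ graphAut
  mul_self : g * g = 1
  exists_follows : ∀ s, ∃ pattern ∈ walkPatterns, Follows (x * g) s s pattern
  x_apply_ne : ∀ p, x p = p → x (g p) ≠ g p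

/-- The points `a` and `b` are at distance `2`, and `g` maps `a` to `b` and fixes the common
neighbours of `a` and `b`. -/
structure MovesPair (g : Equiv.Perm (Fin 100)) (a b : Fin 100) : Prop where
  distance_eq : distance a b = 2
  apply_eq : g a = b
  apply_common : ∀ c : Fin 100, distance a c = 1 → distance b c = 1 → g c = c

/-- The permutation `g` is conjugate to `y` under the centralizer of `x` in `autHS`. -/
def IsCentralizerConj (g : Equiv.Perm (Fin 100)) : Prop :=
  ∃ c ∈ autHS, c * x * c⁻¹ = x ∧ c * y * c⁻¹ = g

theorem IsPartner.conj {c g : Equiv.Perm (Fin 100)} (hc : c ∈ graphAut) (hcx : c * x * c⁻¹ = x)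
    (hg : IsPartner g) : IsPartner (c * g * c⁻¹) where
  mem_graphAut := mul_mem (mul_mem hc hg.mem_graphAut) (inv_mem hc)
  mul_self := by rw [conj_mul, hg.mul_self]; group
  exists_follows s := by
    obtain ⟨pattern, hpattern, hfollows⟩ := hg.exists_follows (c⁻¹ s)
    refine ⟨pattern, hpattern, ?_⟩
    have hconj : c * (x * g) * c⁻¹ = x * (c * g * c⁻¹) := by rw [← conj_mul, hcx]
    simpa [hconj] using hfollows.conj hc
  x_apply_ne p hp := by
    have hxc (q : Fin 100) : x (c q) = c (x q) := by
      simpa using (congrArg (fun f : Equiv.Perm (Fin 100) => f (c q)) hcx).symm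
    have hfix : x (c⁻¹ p) = c⁻¹ p := c.injective (by rw [← hxc]; simpa using hp)
    simpa [hxc] using hg.x_apply_ne _ hfix

theorem MovesPair.conj {c g : Equiv.Perm (Fin 100)} (hc : c ∈ graphAut) {a b : Fin 100}
    (h : MovesPair g a b) : MovesPair (c * g * c⁻¹) (c a) (c b) where
  distance_eq := (hc a b).trans h.distance_eq
  apply_eq := by simp [h.apply_eq]
  apply_common p hap hbp := by
    have hfix := h.apply_common (c⁻¹ p) (by rw [← hc]; simpa using hap)
      (by rw [← hc]; simpa using hbp)
    rw [Equiv.Perm.mul_apply, Equiv.Perm.mul_apply, hfix, ← Equiv.Perm.mul_apply, mul_inv_cancel,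
      Equiv.Perm.one_apply]

theorem MovesPair.symm {g : Equiv.Perm (Fin 100)} (hg : g * g = 1) {a b : Fin 100}
    (h : MovesPair g a b) : MovesPair g b a where
  distance_eq := (distance_comm b a).trans h.distance_eq
  apply_eq := by rw [← h.apply_eq, ← Equiv.Perm.mul_apply, hg, Equiv.Perm.one_apply]
  apply_common c hbc hac := h.apply_common c hac hbc

theorem movesPair_y : MovesPair y 15 52 where
  distance_eq := by decide +kernel
  apply_eq := by decide +kernel
  apply_common := by decide +kernel

/-- Exponents of elements of `autHS` that commute with `x`. -/
def centralizerWords : List (List ℕ) := [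
  [1, 0], [0, 1, 3, 1, 2, 2, 2, 1, 3, 1], [0, 2, 3, 4, 3, 1, 2, 2, 1, 3, 4, 3, 2]]

/-- Exponents of elements `c` of the centralizer of `x` for which the conjugates `c * y * c⁻¹` are
the partners of `x` found by the search. -/
def conjugators : List (List ℕ) := [
  [], [0, 1, 3, 1, 2, 2, 2, 1, 3, 1], [0, 2, 3, 4, 3, 1, 2, 2, 1, 3, 4, 3, 2],
  [0, 2, 3, 4, 3, 1, 2, 2, 1, 3, 4, 3, 2] ++ [0, 4, 2, 4, 3, 3, 3, 4, 2, 4]]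

theorem word_conj_x_eq {c : List ℕ} (hc : c ∈ centralizerWords ++ conjugators) :
    word c * x * (word c)⁻¹ = x := by
  have hcheck : ∀ c ∈ centralizerWords ++ conjugators, ∀ p : Fin 100,
      wordMap (c ++ [1, 0]) p = wordMap ([1, 0] ++ c) p := by decide +kernel
  refine mul_inv_eq_of_eq_mul ?_
  rw [← word_one_zero, ← word_append, ← word_append]
  exact word_ext (hcheck c hc)

/-- The extensions of the partial involution `F` to `p`, each with the image of `p`. -/
def extensions (F : List (ℕ × ℕ)) (p : ℕ) : List (ℕ × List (ℕ × ℕ)) :=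
  match F.lookup p with
  | some q => [(q, F)]
  | none => (bits (candidates F p)).map fun q => (q, (p, q) :: (q, p) :: F)

/-- The extensions of the partial involution `F` to involutions `g` defined on the points
`p`, `x (g p)`, … of a walk whose distances from `s` are the entries of the list. -/
def walks (s : ℕ) : ℕ → List ℕ → List (ℕ × ℕ) → List (List (ℕ × ℕ))
  | _, [], F => [F]
  | p, d :: pattern, F => (extensions F p).flatMap fun e =>
    if distance s (entry xTable e.1) = d then walks s (entry xTable e.1) pattern e.2 else []

/-- The partial involution `F` extends to no graph automorphism other than a conjugate of `y` under
one of the `conjugators`, or it has an orbit of common fixed points with `x`. -/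
def isSettled (F : List (ℕ × ℕ)) : Bool :=
  (conjugators.any fun c => (List.range 100).all fun i =>
    candidates F (wordMap c i) == 1 <<< wordMap c (entry yTable i)) ||
  F.any fun f => entry xTable f.1 == f.1 && entry xTable f.2 == f.2

/-- Every extension of the partial involution `F` along walks from the given starting points is
settled. -/
def search : List ℕ → List (ℕ × ℕ) → Bool
  | [], F => isSettled F
  | s :: starts, F => walkPatterns.all fun pattern => (walks s s pattern F).all (search starts)

/-- The search for the partners of `x` that move the pair `a`, `b`, along walks from these points,
their common neighbours and the fixed points of `x`. -/
def searchPair (a b : ℕ) : Bool :=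
  let common := bits (neighbors a &&& neighbors b)
  search (common ++ [a, b, 39, 61, 83, 88, 92]) ((a, b) :: (b, a) :: common.map fun c => (c, c))

theorem Agrees.apply_eq {g : Equiv.Perm (Fin 100)} {F : List (ℕ × ℕ)} (hF : Agrees g F)
    {p : Fin 100} {q : ℕ} (hq : F.lookup ↑p = some q) : (g p : ℕ) = q := by
  obtain ⟨l, r, rfl, -⟩ := List.lookup_eq_some_iff.mp hq
  obtain ⟨p', hp'⟩ := hF (p, q) (by simp)
  obtain ⟨hp, rfl⟩ := Prod.mk.inj hp'
  rw [Fin.ext hp]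

variable {g : Equiv.Perm (Fin 100)} {F : List (ℕ × ℕ)}

theorem exists_mem_extensions (hg : IsPartner g) (hF : Agrees g F) (p : Fin 100) :
    ∃ F', Agrees g F' ∧ (↑(g p), F') ∈ extensions F p := by
  rw [extensions]
  split
  case h_1 q hq => exact ⟨F, hF, by simp [hF.apply_eq hq]⟩
  case h_2 =>
    refine ⟨(↑p, ↑(g p)) :: (↑(g p), ↑p) :: F, ?_, List.mem_map.mpr
      ⟨_, mem_bits.mpr (testBit_candidates hg.mem_graphAut hF p), rfl⟩⟩
    have hgg : g (g p) = p := by rw [← Equiv.Perm.mul_apply, hg.mul_self, Equiv.Perm.one_apply]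
    rintro f (_ | ⟨_, _ | ⟨_, hf⟩⟩)
    exacts [⟨p, rfl⟩, ⟨g p, by rw [hgg]⟩, hF f hf]

theorem exists_mem_walks (hg : IsPartner g) (hF : Agrees g F) {s p : Fin 100} {pattern : List ℕ}
    (h : Follows (x * g) s p pattern) : ∃ F' ∈ walks s p pattern F, Agrees g F' := by
  induction pattern generalizing p F with
  | nil => exact ⟨F, List.mem_singleton_self F, hF⟩
  | cons d pattern ih =>
    obtain ⟨F', hF', hmem⟩ := exists_mem_extensions hg hF p
    obtain ⟨F'', hF'', hagrees⟩ := ih hF' h.2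
    have hd := h.1
    rw [Equiv.Perm.mul_apply, val_x_apply] at hF'' hd
    exact ⟨F'', List.mem_flatMap.mpr ⟨_, hmem, by rwa [if_pos hd]⟩, hagrees⟩

theorem isCentralizerConj_of_isSettled (hg : IsPartner g) (hF : Agrees g F)
    (h : isSettled F = true) : IsCentralizerConj g := by
  rcases Bool.or_eq_true _ _ ▸ h with h | h
  · obtain ⟨c, hc, hforced⟩ := List.any_eq_true.mp h
    refine ⟨word c, word_mem_autHS c, word_conj_x_eq (List.mem_append_right _ hc),
      mul_inv_eq_of_eq_mul (Equiv.ext fun p => Fin.ext ?_)⟩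
    have hp := beq_iff_eq.mp (List.all_eq_true.mp hforced p (List.mem_range.mpr p.isLt))
    have hbit := testBit_candidates hg.mem_graphAut hF (word c p)
    rwa [val_word_apply, hp, Nat.one_shiftLeft, Nat.testBit_two_pow, decide_eq_true_eq,
      ← val_y_apply, ← val_word_apply] at hbit
  · obtain ⟨f, hf, hfixed⟩ := List.any_eq_true.mp h
    obtain ⟨p, rfl⟩ := hF f hf
    rw [Bool.and_eq_true, beq_iff_eq, beq_iff_eq, ← val_x_apply, ← val_x_apply] at hfixed
    exact absurd (Fin.ext hfixed.2) (hg.x_apply_ne p (Fin.ext hfixed.1))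

theorem isCentralizerConj_of_search (hg : IsPartner g) {starts : List ℕ}
    (hstarts : ∀ s ∈ starts, s < 100) (hF : Agrees g F) (h : search starts F = true) :
    IsCentralizerConj g := by
  induction starts generalizing F with
  | nil => exact isCentralizerConj_of_isSettled hg hF h
  | cons s starts ih =>
    obtain ⟨pattern, hpattern, hfollows⟩ :=
      hg.exists_follows ⟨s, hstarts s List.mem_cons_self⟩
    obtain ⟨F', hF', hagrees⟩ := exists_mem_walks hg hF hfollows
    exact ih (fun t ht => hstarts t (List.mem_cons_of_mem s ht)) hagrees
      (List.all_eq_true.mp (List.all_eq_true.mp h pattern hpattern) F' hF')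

theorem distance_eq_one_of_testBit_neighbors :
    ∀ p q : Fin 100, (neighbors p).testBit q = true → distance p q = 1 := by
  decide +kernel

theorem isCentralizerConj_of_searchPair (hg : IsPartner g) {a b : Fin 100}
    (hab : MovesPair g a b) (h : searchPair a b = true) : IsCentralizerConj g := by
  refine isCentralizerConj_of_search hg ?_ ?_ h
  · intro s hs
    simp only [bits, List.mem_append, List.mem_filter, List.mem_cons, List.mem_range,
      List.not_mem_nil, or_false] at hs
    omega
  · rintro f (_ | ⟨_, _ | ⟨_, hf⟩⟩)
    · exact ⟨a, by rw [hab.apply_eq]⟩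
    · exact ⟨b, by rw [(hab.symm hg.mul_self).apply_eq]⟩
    · obtain ⟨c, hc, rfl⟩ := List.mem_map.mp hf
      lift c to Fin 100 using List.mem_range.mp (List.mem_of_mem_filter hc)
      have hbits := mem_bits.mp hc
      rw [Nat.testBit_and, Bool.and_eq_true] at hbits
      exact ⟨c, by rw [hab.apply_common c (distance_eq_one_of_testBit_neighbors a c hbits.1)
        (distance_eq_one_of_testBit_neighbors b c hbits.2)]⟩

/-- The search succeeds for all pairs `r`, `b` at distance `2` with `r` in the list and `b` not
`seen`, where `seen` grows by the orbit of `r` under the centralizer of `x` each time and finally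
comprises all points. -/
def searchOrbits : List ℕ → ℕ → Bool
  | [], seen => seen == 2 ^ 100 - 1
  | r :: reps, seen =>
    ((bits (sphere r 2)).all fun b => seen.testBit b || searchPair r b) &&
      searchOrbits reps (reach (centralizerWords.map wordMap) 101 r seen)

/-- Every partner of `x` that moves some pair `p`, `b` is conjugate to `y` under the centralizer of
`x`. -/
def IsDone (p : Fin 100) : Prop :=
  ∀ g, IsPartner g → ∀ b, MovesPair g p b → IsCentralizerConj g

theorem IsDone.word_apply {p : Fin 100} (hp : IsDone p) {c : List ℕ}
    (hc : c ∈ centralizerWords) : IsDone (word c p) := fun g hg b hb => by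
  have hcx := word_conj_x_eq (List.mem_append_left _ hc)
  have hcx' : (word c)⁻¹ * x * (word c)⁻¹⁻¹ = x := by
    conv_lhs => rw [← hcx]
    group
  have hcA : (word c)⁻¹ ∈ graphAut := inv_mem (autHS_le_graphAut (word_mem_autHS c))
  have hmoves := hb.conj hcA
  rw [← Equiv.Perm.mul_apply, inv_mul_cancel, Equiv.Perm.one_apply] at hmoves
  obtain ⟨d, hd, hdx, hdy⟩ := hp _ (hg.conj hcA hcx') _ hmoves
  refine ⟨word c * d, mul_mem (word_mem_autHS c) hd, ?_, ?_⟩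
  · rw [conj_by_mul, hdx, hcx]
  · rw [conj_by_mul, hdy]
    group

theorem isDone_of_searchOrbits {reps : List ℕ} (hreps : ∀ r ∈ reps, r < 100) {seen : ℕ}
    (hseen : ∀ i, seen.testBit i = true → ∃ p : Fin 100, ↑p = i ∧ IsDone p)
    (h : searchOrbits reps seen = true) (p : Fin 100) : IsDone p := by
  induction reps generalizing seen with
  | nil =>
    obtain ⟨q, hqp, hq⟩ := hseen p (by
      rw [beq_iff_eq.mp h, Nat.testBit_two_pow_sub_one, decide_eq_true p.isLt])
    exact Fin.ext hqp ▸ hq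
  | cons r reps ih =>
    obtain ⟨hrlt, htail⟩ := List.forall_mem_cons.mp hreps
    lift r to Fin 100 using hrlt
    obtain ⟨hpairs, hrest⟩ := Bool.and_eq_true _ _ ▸ h
    have hr : IsDone r := fun g hg b hb => by
      have hbits : (b : ℕ) ∈ bits (sphere r 2) :=
        mem_bits.mpr (hb.distance_eq ▸ testBit_sphere_distance r b)
      rcases Bool.or_eq_true _ _ ▸ List.all_eq_true.mp hpairs b hbits with h | h
      · obtain ⟨q, hqb, hq⟩ := hseen b h
        exact hq g hg r (Fin.ext hqb ▸ hb.symm hg.mul_self)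
      · exact isCentralizerConj_of_searchPair hg hb h
    refine ih htail (fun i hi => reach_induction ?_ ⟨r, rfl, hr⟩ hseen hi) hrest
    rintro _ hf _ ⟨q, rfl, hq⟩
    obtain ⟨c, hc, rfl⟩ := List.mem_map.mp hf
    exact ⟨word c q, val_word_apply c q, hq.word_apply hc⟩

set_option maxHeartbeats 2000000 in
-- Evaluating the whole search takes the kernel more than half a minute.
theorem searchOrbits_eq_true : searchOrbits [0, 15, 10, 11, 39] 0 = true := by decide +kernel

theorem IsPartner.isCentralizerConj {g : Equiv.Perm (Fin 100)} (hg : IsPartner g) {a b : Fin 100}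
    (hab : MovesPair g a b) : IsCentralizerConj g :=
  isDone_of_searchOrbits (by decide) (by simp) searchOrbits_eq_true a g hg b hab

theorem isPartner_of_closure_eq {g k m : Equiv.Perm (Fin 100)} (hm : m ∈ autHS)
    (hy : k * y * k⁻¹ = g) (hxy : m * (x * y) * m⁻¹ = x * g)
    (hclosure : Subgroup.closure {x, g} = autHS) : IsPartner g := by
  have hgg : g * g = 1 := by rw [← hy, conj_mul, y_mul_y]; group
  refine ⟨autHS_le_graphAut ?_, hgg, fun s => ?_, fun p hp => ?_⟩
  · exact hclosure ▸ Subgroup.subset_closure (Set.mem_insert_of_mem x rfl)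
  · obtain ⟨pattern, hpattern, hfollows⟩ := exists_follows_x_mul_y (m⁻¹ s)
    exact ⟨pattern, hpattern, by simpa [hxy] using hfollows.conj (autHS_le_graphAut hm)⟩
  · have : MulAction.IsPretransitive (Subgroup.closure {x, g}) (Fin 100) :=
      hclosure ▸ isPreprimitive_autHS.1
    exact smul_ne_of_isPretransitive_closure_pair (by simp) hgg hp

theorem rigid_x_y {x' y' z' : Equiv.Perm (Fin 100)} (hone : x' * y' * z' = 1)
    (hclosure : Subgroup.closure {x', y'} = autHS) (hx : ∃ h ∈ autHS, h * x * h⁻¹ = x')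
    (hy : ∃ k ∈ autHS, k * y * k⁻¹ = y') (hz : ∃ m ∈ autHS, m * (x * y)⁻¹ * m⁻¹ = z') :
    ∃ g ∈ autHS, g * x * g⁻¹ = x' ∧ g * y * g⁻¹ = y' ∧ g * (x * y)⁻¹ * g⁻¹ = z' := by
  obtain ⟨h, hh, rfl⟩ := hx
  obtain ⟨k, hk, hky⟩ := hy
  obtain ⟨m, hm, hmz⟩ := hz
  obtain ⟨g, rfl⟩ : ∃ g, h * g * h⁻¹ = y' := ⟨h⁻¹ * y' * h, by group⟩
  have hgy : h⁻¹ * k * y * (h⁻¹ * k)⁻¹ = g := by rw [conj_by_mul, hky]; group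
  have hgxy : h⁻¹ * m * (x * y) * (h⁻¹ * m)⁻¹ = x * g := by
    rw [conj_by_mul, ← inv_inv (x * y), ← conj_inv, hmz, ← eq_inv_of_mul_eq_one_left hone]
    group
  have hgclosure : Subgroup.closure {x, g} = autHS := by
    have hsmul : MulAut.conj h • ({x, g} : Set (Equiv.Perm (Fin 100))) =
        {h * x * h⁻¹, h * g * h⁻¹} := by simp [Set.smul_set_insert]
    rw [← hsmul, ← Subgroup.smul_closure, ← Subgroup.conj_smul_eq_self_of_mem hh] at hclosure
    exact smul_left_cancel _ hclosure
  have hhk := mul_mem (inv_mem hh) hk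
  have hmoves := movesPair_y.conj (autHS_le_graphAut hhk)
  rw [hgy] at hmoves
  obtain ⟨c, hc, hcx, hcy⟩ := (isPartner_of_closure_eq (mul_mem (inv_mem hh) hm) hgy hgxy
    hgclosure).isCentralizerConj hmoves
  have hx' : h * c * x * (h * c)⁻¹ = h * x * h⁻¹ := by rw [conj_by_mul, hcx]
  have hy' : h * c * y * (h * c)⁻¹ = h * g * h⁻¹ := by rw [conj_by_mul, hcy]
  refine ⟨h * c, mul_mem hh hc, hx', hy', ?_⟩
  rw [← conj_inv, ← conj_mul, hx', hy', inv_eq_of_mul_eq_one_right hone]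

end Rigidity

end HigmanSims

theorem nice_triple_deg100_stmt10 :
    IsNice x y (x * y)⁻¹ ∧
    x.cycleType = Multiset.replicate 19 5 ∧
    y.cycleType = Multiset.replicate 47 2 ∧
    ((x * y)⁻¹).cycleType = Multiset.replicate 10 6 + Multiset.replicate 10 3 + Multiset.replicate 5 2 ∧
    Nat.card ↥(Subgroup.closure {x, y} : Subgroup (Equiv.Perm (Fin 100))) = 88704000 := by
  open HigmanSims in
  exact ⟨⟨mul_inv_cancel _, ⟨autHS_ne_alternatingGroup, autHS_ne_top⟩, isPreprimitive_autHS,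
    exists_simple_normal_subgroup_autHS, permInd_add_permInd_add_permInd,
    fun _ _ _ => rigid_x_y, fun _ => exists_conj_eq_zpow⟩,
    cycleType_x, cycleType_y, cycleType_inv_x_mul_y, natCard_autHS⟩
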